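/- arXiv:2001.05785 — 4 statements merged into one kernel-verified Lean document; each statement's English description precedes it below -/
import Mathlib

section
/- Let S be a Polish metric space and let P be a regular Markov operator on S which is asymptotically stable and has the e-property in L_FM(S) at a point z ∈ S. Then P also has the e-property in C_b(S) at z, i.e., for every bounded continuous f : S → ℝ, lim_{x→z} sup_{n∈ℕ} |Uⁿf(x) − Uⁿf(z)| = 0. -/
open MeasureTheory ProbabilityTheory Filter Topology

/-- The `n`-step evolution of a measure under the Markov operator generated by the
transition kernel `κ`: `P⁰μ = μ`, `Pⁿ⁺¹μ = (Pⁿμ).bind κ`. -/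
noncomputable def kIter {S : Type*} [MeasurableSpace S] (κ : ProbabilityTheory.Kernel S S) :
    ℕ → Measure S → Measure S
  | 0, μ => μ
  | n + 1, μ => (kIter κ n μ).bind (fun x => κ x)

/-- The `n`-th iterate of the dual operator: `Uⁿf(x) = ∫ f d(Pⁿδₓ)`. -/
noncomputable def kDual {S : Type*} [MeasurableSpace S] (κ : ProbabilityTheory.Kernel S S)
    (n : ℕ) (f : S → ℝ) (x : S) : ℝ :=
  ∫ y, f y ∂(kIter κ n (Measure.dirac x))

/-- A real-valued function is bounded. -/
def IsBddFun {S : Type*} (f : S → ℝ) : Prop := ∃ C : ℝ, ∀ x, |f x| ≤ C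

/-- Asymptotic stability: `μst` is an invariant probability measure and `Pⁿμ → μst`
weakly for every Borel probability measure `μ`. -/
def IsAsympStable {S : Type*} [MeasurableSpace S] [TopologicalSpace S]
    (κ : ProbabilityTheory.Kernel S S) (μst : Measure S) : Prop :=
  IsProbabilityMeasure μst ∧ kIter κ 1 μst = μst ∧
    ∀ μ : Measure S, IsProbabilityMeasure μ → ∀ f : S → ℝ, Continuous f → IsBddFun f →
      Tendsto (fun n => ∫ x, f x ∂(kIter κ n μ)) atTop (𝓝 (∫ x, f x ∂μst))

/-- The e-property in `L_FM(S)` (1-Lipschitz functions with values in `[0,1]`) at a point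
`z`: for every such `f`, `sup_{n} |Uⁿf(x) − Uⁿf(z)| → 0` as `x → z`. -/
def EPropFMAt {S : Type*} [MeasurableSpace S] [PseudoMetricSpace S]
    (κ : ProbabilityTheory.Kernel S S) (z : S) : Prop :=
  ∀ f : S → ℝ, LipschitzWith 1 f → (∀ x, f x ∈ Set.Icc (0 : ℝ) 1) →
    Tendsto (fun x => ⨆ n : ℕ, |kDual κ n f x - kDual κ n f z|) (𝓝 z) (𝓝 0)

instance isProbabilityMeasure_kIter {S : Type*} [MeasurableSpace S] (κ : Kernel S S)
    [IsMarkovKernel κ] (n : ℕ) (μ : Measure S) [hμ : IsProbabilityMeasure μ] :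
    IsProbabilityMeasure (kIter κ n μ) := by
  induction n with
  | zero => exact hμ
  | succ n ih => exact inferInstanceAs (IsProbabilityMeasure (κ ∘ₘ kIter κ n μ))

/-- Weak convergence of probability measures can be tested on `1`-Lipschitz functions with values
in `[0, 1]`. -/
theorem tendsto_integral_of_forall_lipschitzWith_one {ι S : Type*} [PseudoMetricSpace S]
    [MeasurableSpace S] [BorelSpace S] {l : Filter ι} [l.IsCountablyGenerated]
    {μs : ι → Measure S} [∀ i, IsProbabilityMeasure (μs i)]
    {μ : Measure S} [IsProbabilityMeasure μ]
    (h : ∀ f : S → ℝ, LipschitzWith 1 f → (∀ x, f x ∈ Set.Icc (0 : ℝ) 1) →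
      Tendsto (fun i => ∫ x, f x ∂μs i) l (𝓝 (∫ x, f x ∂μ)))
    {f : S → ℝ} (hf : Continuous f) (hfb : IsBddFun f) :
    Tendsto (fun i => ∫ x, f x ∂μs i) l (𝓝 (∫ x, f x ∂μ)) := by
  let νs : ι → ProbabilityMeasure S := fun i => ⟨μs i, inferInstance⟩
  let ν : ProbabilityMeasure S := ⟨μ, inferInstance⟩
  have hν : Tendsto νs l (𝓝 ν) := by
    rw [tendsto_iff_forall_lipschitz_integral_tendsto]
    rintro g ⟨C, hC⟩ ⟨L, hL⟩
    change Tendsto (fun i => ∫ x, g x ∂μs i) l (𝓝 (∫ x, g x ∂μ))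
    obtain ⟨x₀⟩ : Nonempty S := nonempty_of_isProbabilityMeasure μ
    have hC0 : 0 ≤ C := dist_nonneg.trans (hC x₀ x₀)
    have hM : 0 < 2 * C + L + 1 := by positivity
    set M : ℝ := 2 * C + L + 1 with hMdef
    let φ : S → ℝ := fun x => (g x - g x₀ + C) / M
    have hφLip : LipschitzWith 1 φ := by
      refine LipschitzWith.of_dist_le_mul fun x y => ?_
      have hxy := hL.dist_le_mul x y
      have hsub : φ x - φ y = (g x - g y) / M := by simp only [φ]; ring
      rw [Real.dist_eq] at hxy
      rw [Real.dist_eq, hsub, abs_div, abs_of_pos hM, div_le_iff₀ hM, NNReal.coe_one, one_mul,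
        mul_comm]
      refine hxy.trans (mul_le_mul_of_nonneg_right ?_ dist_nonneg)
      linarith
    have hφmem : ∀ x, φ x ∈ Set.Icc (0 : ℝ) 1 := by
      intro x
      have hx := hC x x₀
      rw [Real.dist_eq, abs_le] at hx
      refine ⟨div_nonneg (by linarith) hM.le, (div_le_one hM).2 ?_⟩
      have : (0 : ℝ) ≤ L := L.coe_nonneg
      linarith
    have hint : ∀ (ρ : Measure S) [IsProbabilityMeasure ρ],
        ∫ x, g x ∂ρ = M * ∫ x, φ x ∂ρ + (g x₀ - C) := by
      intro ρ _
      have hφint : Integrable φ ρ :=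
        Integrable.of_mem_Icc 0 1 hφLip.continuous.measurable.aemeasurable (ae_of_all _ hφmem)
      have hg : g = fun x => M * φ x + (g x₀ - C) := by
        funext x
        simp only [φ]
        field_simp
        ring
      conv_lhs => rw [hg]
      rw [integral_add (hφint.const_mul M) (integrable_const _), integral_const_mul]
      simp
    simp only [hint]
    exact ((h φ hφLip hφmem).const_mul M).add_const _
  obtain ⟨C, hC⟩ := hfb
  exact ProbabilityMeasure.tendsto_iff_forall_integral_tendsto.1 hν
    (BoundedContinuousFunction.ofNormedAddCommGroup f hf C hC)

theorem abs_kDual_le {S : Type*} [MeasurableSpace S] (κ : Kernel S S) [IsMarkovKernel κ]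
    {f : S → ℝ} {C : ℝ} (hC : ∀ x, |f x| ≤ C) (n : ℕ) (x : S) : |kDual κ n f x| ≤ C := by
  simpa [kDual] using norm_integral_le_of_norm_le_const
    (μ := kIter κ n (Measure.dirac x)) (f := f) (ae_of_all _ hC)

theorem bddAbove_range_abs_kDual_sub {S : Type*} [MeasurableSpace S] (κ : Kernel S S)
    [IsMarkovKernel κ] {f : S → ℝ} (hf : IsBddFun f) (x z : S) :
    BddAbove (Set.range fun n : ℕ => |kDual κ n f x - kDual κ n f z|) := by
  obtain ⟨C, hC⟩ := hf
  refine ⟨C + C, ?_⟩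
  rintro _ ⟨n, rfl⟩
  exact (abs_sub _ _).trans (add_le_add (abs_kDual_le κ hC n x) (abs_kDual_le κ hC n z))

/-- A regular Markov operator on a Polish metric space which is asymptotically stable and has
the e-property in `L_FM(S)` at `z` also has the e-property in `C_b(S)` at `z`. -/
theorem ePropCb_of_ePropFM_of_asympStable
    {S : Type*} [MetricSpace S] [CompleteSpace S] [SecondCountableTopology S]
    [MeasurableSpace S] [BorelSpace S]
    (κ : ProbabilityTheory.Kernel S S) [IsMarkovKernel κ]
    (μst : Measure S) (hstab : IsAsympStable κ μst)
    (z : S) (hEz : EPropFMAt κ z) :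
    ∀ f : S → ℝ, Continuous f → IsBddFun f →
      Tendsto (fun x => ⨆ n : ℕ, |kDual κ n f x - kDual κ n f z|) (𝓝 z) (𝓝 0) := by
  intro f hf hfb
  obtain ⟨hμst, -, hconv⟩ := hstab
  have hfm : ∀ g : S → ℝ, (∀ x, g x ∈ Set.Icc (0 : ℝ) 1) → IsBddFun g := fun g hg =>
    ⟨1, fun x => abs_le.2 ⟨by linarith [(hg x).1], (hg x).2⟩⟩
  have hfixed : ∀ n, Tendsto (fun x => kDual κ n f x) (𝓝 z) (𝓝 (kDual κ n f z)) := by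
    intro n
    refine tendsto_integral_of_forall_lipschitzWith_one (fun g hg hg01 => ?_) hf hfb
    rw [tendsto_iff_dist_tendsto_zero]
    exact squeeze_zero (fun _ => dist_nonneg)
      (fun x => le_ciSup (bddAbove_range_abs_kDual_sub κ (hfm g hg01) x z) n) (hEz g hg hg01)
  have hjoint : Tendsto (fun p : ℕ × S => kDual κ p.1 f p.2) (atTop ×ˢ 𝓝 z)
      (𝓝 (∫ x, f x ∂μst)) := by
    refine tendsto_integral_of_forall_lipschitzWith_one (fun g hg hg01 => ?_) hf hfb
    have hz : Tendsto (fun p : ℕ × S => kDual κ p.1 g z) (atTop ×ˢ 𝓝 z) (𝓝 (∫ x, g x ∂μst)) :=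
      (hconv (Measure.dirac z) inferInstance g hg.continuous (hfm g hg01)).comp tendsto_fst
    have hdiff : Tendsto (fun p : ℕ × S => kDual κ p.1 g p.2 - kDual κ p.1 g z)
        (atTop ×ˢ 𝓝 z) (𝓝 0) :=
      squeeze_zero_norm
        (fun p => le_ciSup (bddAbove_range_abs_kDual_sub κ (hfm g hg01) p.2 z) p.1)
        ((hEz g hg hg01).comp tendsto_snd)
    simpa [kDual] using hdiff.add hz
  rw [Metric.tendsto_nhds]
  intro ε hε
  obtain ⟨A, hA, V, hV, hAV⟩ := Filter.eventually_prod_iff.1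
    (Metric.tendsto_nhds.1 hjoint (ε / 4) (by positivity))
  obtain ⟨N, hN⟩ := eventually_atTop.1 hA
  have hsmall : ∀ᶠ x in 𝓝 z, ∀ n ∈ Set.Iio N, dist (kDual κ n f x) (kDual κ n f z) < ε / 2 :=
    (eventually_all_finite (Set.finite_Iio N)).2 fun n _ =>
      Metric.tendsto_nhds.1 (hfixed n) (ε / 2) (by positivity)
  filter_upwards [hV, hsmall] with x hxV hxN
  have hsup : ⨆ n : ℕ, |kDual κ n f x - kDual κ n f z| ≤ ε / 2 := by
    refine ciSup_le fun n => ?_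
    rw [← Real.dist_eq]
    rcases lt_or_ge n N with hn | hn
    · exact (hxN n hn).le
    · have h₁ := hAV (hN n hn) hxV
      have h₂ := hAV (hN n hn) hV.self_of_nhds
      have h₃ := dist_triangle_right (kDual κ n f x) (kDual κ n f z) (∫ x, f x ∂μst)
      simp only at h₁ h₂
      linarith
  rw [Real.dist_0_eq_abs, abs_of_nonneg (Real.iSup_nonneg fun _ => abs_nonneg _)]
  linarith
end

section
/- Let S be a Polish metric space and let P be an asymptotically stable Markov-Feller operator on S with invariant probability measure μ*, and for k ≥ 1 let O_k = { x ∈ S : there exist an open neighbourhood O of x and N ∈ ℕ such that for all n ≥ N and all y ∈ O, d_FM(Pⁿδ_y, μ*) ≤ 1/k }. Then for every z ∈ ⋂_{k≥1} O_k one has lim_{x→z} sup_{n∈ℕ} d_FM(Pⁿδ_x, Pⁿδ_z) = 0; in particular P has the e-property in L_FM(S) at every point of ⋂_{k≥1} O_k. -/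
open MeasureTheory ProbabilityTheory Filter Topology

/-- The Feller property: the dual operator maps bounded continuous functions to
continuous functions. -/
def IsFeller {S : Type*} [MeasurableSpace S] [TopologicalSpace S]
    (κ : ProbabilityTheory.Kernel S S) : Prop :=
  ∀ f : S → ℝ, Continuous f → IsBddFun f → Continuous (fun x => ∫ y, f y ∂(κ x))

/-- The Fortet–Mourier distance of two finite Borel measures: the supremum of
`|∫ f dμ − ∫ f dν|` over all 1-Lipschitz functions `f : S → [0,1]`. -/
noncomputable def dFM {S : Type*} [MeasurableSpace S] [PseudoMetricSpace S]
    (μ ν : Measure S) : ℝ :=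
  ⨆ f : {f : S → ℝ // LipschitzWith 1 f ∧ ∀ x, f x ∈ Set.Icc (0 : ℝ) 1},
    |∫ x, f.1 x ∂μ - ∫ x, f.1 x ∂ν|

/-- The open set `O_k` of points having a neighbourhood on which, from some time on, all
`n`-step distributions are `1/k`-close to the invariant measure in Fortet–Mourier distance. -/
def Ok {S : Type*} [MeasurableSpace S] [MetricSpace S]
    (κ : ProbabilityTheory.Kernel S S) (μst : Measure S) (k : ℕ) : Set S :=
  {x : S | ∃ O : Set S, IsOpen O ∧ x ∈ O ∧ ∃ N : ℕ, ∀ n ≥ N, ∀ y ∈ O,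
    dFM (kIter κ n (Measure.dirac y)) μst ≤ 1 / (k : ℝ)}

section FortetMourier

variable {S : Type*} [MeasurableSpace S]

instance kIter_isProbabilityMeasure (κ : Kernel S S) [IsMarkovKernel κ] (n : ℕ) (μ : Measure S)
    [IsProbabilityMeasure μ] : IsProbabilityMeasure (kIter κ n μ) := by
  induction n with
  | zero => assumption
  | succ n ih => exact inferInstanceAs (IsProbabilityMeasure ((kIter κ n μ).bind κ))

section Topological

variable [TopologicalSpace S] [OpensMeasurableSpace S]

lemma Continuous.integrable_of_isBddFun {f : S → ℝ} (hf : Continuous f) (hb : IsBddFun f)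
    (μ : Measure S) [IsFiniteMeasure μ] : Integrable f μ := by
  obtain ⟨C, hC⟩ := hb
  exact Integrable.of_bound hf.measurable.aestronglyMeasurable C (.of_forall hC)

/-- The iterates of the dual of a Feller operator preserve bounded continuous functions. -/
lemma IsFeller.continuous_kDual {κ : Kernel S S} [IsMarkovKernel κ] (hκ : IsFeller κ) (n : ℕ)
    {f : S → ℝ} (hf : Continuous f) (hb : IsBddFun f) : Continuous (kDual κ n f) := by
  induction n generalizing f with
  | zero =>
    have h : kDual κ 0 f = f := by
      funext x
      exact integral_dirac' f x hf.measurable.stronglyMeasurable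
    rwa [h]
  | succ n ih =>
    have hstep : kDual κ (n + 1) f = kDual κ n (fun x => ∫ y, f y ∂κ x) := by
      funext x
      exact Kernel.integral_comp (η := κ)
        (κ := Kernel.const Unit (kIter κ n (Measure.dirac x))) (a := ())
        (hf.integrable_of_isBddFun hb (kIter κ (n + 1) (Measure.dirac x)))
    rw [hstep]
    refine ih (hκ f hf hb) ?_
    obtain ⟨C, hC⟩ := hb
    refine ⟨C, fun x => ?_⟩
    simpa using norm_integral_le_of_norm_le_const (μ := κ x) (f := f) (C := C) (.of_forall hC)

end Topological

lemma integral_mem_Icc_of_mem_Icc {f : S → ℝ} (h01 : ∀ x, f x ∈ Set.Icc (0 : ℝ) 1)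
    (μ : Measure S) [IsProbabilityMeasure μ] : ∫ x, f x ∂μ ∈ Set.Icc (0 : ℝ) 1 := by
  refine ⟨integral_nonneg fun x => (h01 x).1, ?_⟩
  have h := norm_integral_le_of_norm_le_const (μ := μ) (f := f) (C := 1)
    (.of_forall fun x => by rw [Real.norm_of_nonneg (h01 x).1]; exact (h01 x).2)
  exact (le_abs_self _).trans (by simpa using h)

lemma abs_integral_sub_integral_le_one {f : S → ℝ} (h01 : ∀ x, f x ∈ Set.Icc (0 : ℝ) 1)
    (μ ν : Measure S) [IsProbabilityMeasure μ] [IsProbabilityMeasure ν] :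
    |∫ x, f x ∂μ - ∫ x, f x ∂ν| ≤ 1 := by
  have hμ := integral_mem_Icc_of_mem_Icc h01 μ
  have hν := integral_mem_Icc_of_mem_Icc h01 ν
  exact abs_sub_le_iff.2 ⟨by linarith [hμ.2, hν.1], by linarith [hν.2, hμ.1]⟩

section Metric

variable [PseudoMetricSpace S]

lemma abs_integral_sub_integral_le_dFM {f : S → ℝ} (hf : LipschitzWith 1 f)
    (h01 : ∀ x, f x ∈ Set.Icc (0 : ℝ) 1) (μ ν : Measure S) [IsProbabilityMeasure μ]
    [IsProbabilityMeasure ν] : |∫ x, f x ∂μ - ∫ x, f x ∂ν| ≤ dFM μ ν :=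
  le_ciSup (f := fun f : {f : S → ℝ // LipschitzWith 1 f ∧ ∀ x, f x ∈ Set.Icc (0 : ℝ) 1} =>
      |∫ x, f.1 x ∂μ - ∫ x, f.1 x ∂ν|)
    ⟨1, by rintro _ ⟨g, rfl⟩; exact abs_integral_sub_integral_le_one g.2.2 μ ν⟩ ⟨f, hf, h01⟩

lemma dFM_nonneg (μ ν : Measure S) : 0 ≤ dFM μ ν :=
  Real.iSup_nonneg fun _ => abs_nonneg _

lemma dFM_le_of_forall {μ ν : Measure S} {c : ℝ} (hc : 0 ≤ c)
    (h : ∀ f : S → ℝ, LipschitzWith 1 f → (∀ x, f x ∈ Set.Icc (0 : ℝ) 1) →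
      |∫ x, f x ∂μ - ∫ x, f x ∂ν| ≤ c) : dFM μ ν ≤ c :=
  Real.iSup_le (fun f => h f.1 f.2.1 f.2.2) hc

lemma dFM_le_one (μ ν : Measure S) [IsProbabilityMeasure μ] [IsProbabilityMeasure ν] :
    dFM μ ν ≤ 1 :=
  dFM_le_of_forall zero_le_one fun _ _ h01 => abs_integral_sub_integral_le_one h01 μ ν

lemma dFM_le_dFM_add_dFM (μ ν ρ : Measure S) [IsProbabilityMeasure μ] [IsProbabilityMeasure ν]
    [IsProbabilityMeasure ρ] : dFM μ ν ≤ dFM μ ρ + dFM ν ρ := by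
  refine dFM_le_of_forall (add_nonneg (dFM_nonneg _ _) (dFM_nonneg _ _)) fun f hf h01 => ?_
  have hμ := abs_integral_sub_integral_le_dFM hf h01 μ ρ
  have hν := abs_integral_sub_integral_le_dFM hf h01 ν ρ
  rw [abs_sub_comm] at hν
  exact (abs_sub_le _ _ _).trans (add_le_add hμ hν)

variable [OpensMeasurableSpace S]

lemma integral_le_integral_add_of_levyProkhorovEDist_lt {μ ν : Measure S}
    [IsProbabilityMeasure μ] [IsProbabilityMeasure ν] {ε : ℝ} (hε : 0 < ε)
    (hμν : levyProkhorovEDist μ ν < ENNReal.ofReal ε) {f : S → ℝ} (hf : LipschitzWith 1 f)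
    (h01 : ∀ x, f x ∈ Set.Icc (0 : ℝ) 1) : ∫ x, f x ∂μ ≤ ∫ x, f x ∂ν + 2 * ε := by
  have hint (ρ : Measure S) [IsProbabilityMeasure ρ] : Integrable f ρ :=
    hf.continuous.integrable_of_isBddFun
      ⟨1, fun x => by rw [abs_of_nonneg (h01 x).1]; exact (h01 x).2⟩ ρ
  have hanti (ρ : Measure S) [IsProbabilityMeasure ρ] (g : S → ℝ) :
      Antitone fun t : ℝ => ρ.real {a | t ≤ g a} :=
    fun _ _ hst => measureReal_mono fun _ h => hst.trans h
  have hintOn (ρ : Measure S) [IsProbabilityMeasure ρ] (g : S → ℝ) (M : ℝ) :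
      IntegrableOn (fun t : ℝ => ρ.real {a | t ≤ g a}) (Set.Ioc 0 M) :=
    Measure.integrableOn_of_bounded (M := 1) measure_Ioc_lt_top.ne
      (hanti ρ g).measurable.aestronglyMeasurable
      (.of_forall fun t => by
        rw [Real.norm_of_nonneg measureReal_nonneg]; exact measureReal_le_one)
  have hle (t : ℝ) : μ.real {a | t ≤ f a} ≤ ν.real {a | t ≤ f a + ε} + ε := by
    have h := left_measure_le_of_levyProkhorovEDist_lt hμν
      (hf.continuous.measurable measurableSet_Ici : MeasurableSet {a | t ≤ f a})
    rw [ENNReal.toReal_ofReal hε.le] at h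
    have hsub : Metric.thickening ε {a | t ≤ f a} ⊆ {a | t ≤ f a + ε} := by
      intro x hx
      obtain ⟨y, hy, hxy⟩ := Metric.mem_thickening_iff.1 hx
      have hd := hf.dist_le_mul y x
      rw [dist_comm y x, Real.dist_eq, NNReal.coe_one, one_mul] at hd
      have hd' := (le_abs_self _).trans hd
      simp only [Set.mem_ofPred_eq] at hy ⊢
      linarith
    have h' := ENNReal.toReal_mono (by finiteness)
      (h.trans (add_le_add_left (measure_mono hsub) _))
    rwa [ENNReal.toReal_add (by finiteness) (by finiteness), ENNReal.toReal_ofReal hε.le] at h'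
  calc ∫ x, f x ∂μ
      = ∫ t in Set.Ioc 0 1, μ.real {a | t ≤ f a} :=
        (hint μ).integral_eq_integral_Ioc_meas_le (.of_forall fun x => (h01 x).1)
          (.of_forall fun x => (h01 x).2)
    _ ≤ ∫ t in Set.Ioc (0 : ℝ) 1, (ν.real {a | t ≤ f a + ε} + ε) :=
        integral_mono (hintOn μ f 1) ((hintOn ν (f · + ε) 1).add (integrable_const _)) hle
    _ = (∫ t in Set.Ioc (0 : ℝ) 1, ν.real {a | t ≤ f a + ε}) + ε := by
        rw [integral_add (hintOn ν (f · + ε) 1) (integrable_const _)]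
        simp
    _ ≤ (∫ t in Set.Ioc (0 : ℝ) (1 + ε), ν.real {a | t ≤ f a + ε}) + ε := by
        refine add_le_add_left ?_ ε
        exact setIntegral_mono_set (hintOn ν (f · + ε) (1 + ε))
          (.of_forall fun _ => measureReal_nonneg)
          (Set.Ioc_subset_Ioc_right (by linarith)).eventuallyLE
    _ = (∫ x, (f x + ε) ∂ν) + ε := by
        have hadd : Integrable (fun x => f x + ε) ν := (hint ν).add (integrable_const ε)
        rw [hadd.integral_eq_integral_Ioc_meas_le (M := 1 + ε)
          (.of_forall fun x => add_nonneg (h01 x).1 hε.le)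
          (.of_forall fun x => by simpa using (h01 x).2)]
    _ = ∫ x, f x ∂ν + 2 * ε := by
        rw [integral_add (hint ν) (integrable_const _)]
        simp
        ring

lemma dFM_le_of_levyProkhorovEDist_lt {μ ν : Measure S} [IsProbabilityMeasure μ]
    [IsProbabilityMeasure ν] {ε : ℝ} (hε : 0 < ε)
    (hμν : levyProkhorovEDist μ ν < ENNReal.ofReal ε) : dFM μ ν ≤ 2 * ε := by
  refine dFM_le_of_forall (by positivity) fun f hf h01 => abs_sub_le_iff.2 ⟨?_, ?_⟩
  · linarith [integral_le_integral_add_of_levyProkhorovEDist_lt hε hμν hf h01]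
  · rw [levyProkhorovEDist_comm] at hμν
    linarith [integral_le_integral_add_of_levyProkhorovEDist_lt hε hμν hf h01]

/-- On a separable space, weak convergence of probability measures implies convergence in the
Fortet–Mourier distance. -/
lemma tendsto_dFM_of_tendsto [SecondCountableTopology S] {ι : Type*} {l : Filter ι}
    {μs : ι → ProbabilityMeasure S} {μ : ProbabilityMeasure S} (h : Tendsto μs l (𝓝 μ)) :
    Tendsto (fun i => dFM (μs i : Measure S) (μ : Measure S)) l (𝓝 0) := by
  have hLP := (LevyProkhorov.continuous_ofMeasure_probabilityMeasure.tendsto μ).comp h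
  rw [Metric.tendsto_nhds]
  intro ε hε
  have hε' : 0 < ENNReal.ofReal (ε / 3) := ENNReal.ofReal_pos.2 (by positivity)
  filter_upwards [EMetric.tendsto_nhds.1 hLP _ hε'] with i hi
  have hle : dFM (μs i : Measure S) μ ≤ 2 * (ε / 3) :=
    dFM_le_of_levyProkhorovEDist_lt (by positivity) hi
  rw [Real.dist_0_eq_abs, abs_of_nonneg (dFM_nonneg _ _)]
  linarith

lemma IsFeller.tendsto_dFM_kIter_dirac [SecondCountableTopology S] {κ : Kernel S S}
    [IsMarkovKernel κ] (hκ : IsFeller κ) (n : ℕ) (z : S) :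
    Tendsto (fun x => dFM (kIter κ n (Measure.dirac x)) (kIter κ n (Measure.dirac z)))
      (𝓝 z) (𝓝 0) := by
  refine tendsto_dFM_of_tendsto (μs := fun x => ⟨kIter κ n (Measure.dirac x), inferInstance⟩)
    (μ := ⟨kIter κ n (Measure.dirac z), inferInstance⟩) ?_
  refine ProbabilityMeasure.tendsto_iff_forall_integral_tendsto.2 fun f =>
    (hκ.continuous_kDual n f.continuous ⟨‖f‖, f.norm_coe_le_norm⟩).tendsto z

end Metric

lemma tendsto_iSup_dFM_kIter_dirac [MetricSpace S] [OpensMeasurableSpace S]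
    [SecondCountableTopology S] {κ : Kernel S S} [IsMarkovKernel κ] (hκ : IsFeller κ)
    {μst : Measure S} [IsProbabilityMeasure μst] {z : S} (hz : ∀ k ≥ 1, z ∈ Ok κ μst k) :
    Tendsto (fun x => ⨆ n : ℕ,
      dFM (kIter κ n (Measure.dirac x)) (kIter κ n (Measure.dirac z))) (𝓝 z) (𝓝 0) := by
  rw [Metric.tendsto_nhds]
  intro ε hε
  obtain ⟨k, hk⟩ := exists_nat_one_div_lt (show 0 < ε / 4 by positivity)
  obtain ⟨O, hO, hzO, N, hN⟩ := hz (k + 1) (by omega)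
  have hsmall : ∀ᶠ x in 𝓝 z, ∀ n ∈ Set.Iio N,
      dFM (kIter κ n (Measure.dirac x)) (kIter κ n (Measure.dirac z)) < ε / 2 :=
    (eventually_all_finite (Set.finite_Iio N)).2 fun n _ =>
      (hκ.tendsto_dFM_kIter_dirac n z).eventually_lt_const (by positivity)
  filter_upwards [hsmall, hO.mem_nhds hzO] with x hx hxO
  have hle : ⨆ n : ℕ, dFM (kIter κ n (Measure.dirac x)) (kIter κ n (Measure.dirac z)) ≤ ε / 2 := by
    refine ciSup_le fun n => ?_
    rcases lt_or_ge n N with hn | hn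
    · exact (hx n hn).le
    · have hxn := hN n hn x hxO
      have hzn := hN n hn z hzO
      push_cast at hxn hzn
      linarith [dFM_le_dFM_add_dFM (kIter κ n (Measure.dirac x)) (kIter κ n (Measure.dirac z)) μst]
  rw [Real.dist_0_eq_abs, abs_of_nonneg (Real.iSup_nonneg fun _ => dFM_nonneg _ _)]
  linarith

end FortetMourier

/-- For an asymptotically stable Markov–Feller operator on a Polish metric space, at every
point `z` of `⋂_{k≥1} O_k` one has `sup_{n} d_FM(Pⁿδₓ, Pⁿδ_z) → 0` as `x → z`; in particular
the operator has the e-property in `L_FM(S)` at every point of this intersection. -/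
theorem ePropFM_on_inter_Ok
    {S : Type*} [MetricSpace S] [CompleteSpace S] [SecondCountableTopology S]
    [MeasurableSpace S] [BorelSpace S]
    (κ : ProbabilityTheory.Kernel S S) [IsMarkovKernel κ]
    (hFeller : IsFeller κ) (μst : Measure S) (hstab : IsAsympStable κ μst) :
    ∀ z ∈ ⋂ k ∈ {k : ℕ | 1 ≤ k}, Ok κ μst k,
      Tendsto (fun x => ⨆ n : ℕ,
          dFM (kIter κ n (Measure.dirac x)) (kIter κ n (Measure.dirac z))) (𝓝 z) (𝓝 0) ∧
      ∀ f : S → ℝ, LipschitzWith 1 f → (∀ x, f x ∈ Set.Icc (0 : ℝ) 1) →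
        Tendsto (fun x => ⨆ n : ℕ, |kDual κ n f x - kDual κ n f z|) (𝓝 z) (𝓝 0) := by
  intro z hz
  have : IsProbabilityMeasure μst := hstab.1
  have hlim := tendsto_iSup_dFM_kIter_dirac hFeller (Set.mem_iInter₂.1 hz)
  refine ⟨hlim, fun f hf h01 => squeeze_zero (fun x => Real.iSup_nonneg fun _ => abs_nonneg _)
    (fun x => ciSup_mono ⟨1, ?_⟩ fun n => abs_integral_sub_integral_le_dFM hf h01 _ _) hlim⟩
  rintro _ ⟨n, rfl⟩
  exact dFM_le_one _ _
end

section
/- Let S be the circle ℝ/ℤ and let P be the Markov operator generated by π(y,·) = δ_{2y} for y ∈ [0,1/2) and π(y,·) = (1/2)δ_0 + (1/2)δ_{2y−1} for y ∈ [1/2,1). Then P does not have the e-property in C_b(S) at any dyadic rational point z (any z ∈ [0,1) with only finitely many binary digits equal to 1): there exists a bounded Lipschitz function f on S with f(0) = 0 and f(1/2) = 1 such that lim sup_{x→z} sup_{n∈ℕ} |Uⁿf(x) − Uⁿf(z)| ≥ 2^{−m}, where m is the number of digits equal to 1 in the binary expansion of z. Consequently, the set of points at which this asymptotically stable Markov-Feller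 operator fails the e-property in C_b(S) is dense in S. -/
open MeasureTheory Filter Topology

/-- The representative in `[0,1)` of a point of the circle `ℝ/ℤ`. -/
noncomputable def circleRep (x : UnitAddCircle) : ℝ :=
  ((AddCircle.equivIco (1 : ℝ) 0) x : ℝ)

/-- The transition probability function `π(y,·) = δ_{2y}` for `y ∈ [0,1/2)` and
`π(y,·) = (1/2)δ₀ + (1/2)δ_{2y−1}` for `y ∈ [1/2,1)` (arithmetic modulo 1, so that
`δ_{2y−1} = δ_{2y}` on the circle). -/
noncomputable def circleKer (y : UnitAddCircle) : Measure UnitAddCircle :=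
  if circleRep y < 1 / 2 then Measure.dirac (y + y)
  else (1 / 2 : ENNReal) • Measure.dirac (0 : UnitAddCircle) +
    (1 / 2 : ENNReal) • Measure.dirac (y + y)

/-- The `n`-step evolution of a measure under the Markov operator generated by
`circleKer`. -/
noncomputable def circleP : ℕ → Measure UnitAddCircle → Measure UnitAddCircle
  | 0, μ => μ
  | n + 1, μ => (circleP n μ).bind circleKer

/-- The `n`-th iterate of the dual operator: `Uⁿf(x) = ∫ f d(Pⁿδₓ)`. -/
noncomputable def circleU (n : ℕ) (f : UnitAddCircle → ℝ) (x : UnitAddCircle) : ℝ :=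
  ∫ y, f y ∂(circleP n (Measure.dirac x))

/-- The `i`-th binary digit `e_{i+1}(x)` of a real number `x ∈ [0,1)` (the expansion with
infinitely many digits equal to `0`). -/
noncomputable def binDigit (x : ℝ) (i : ℕ) : ℕ := (⌊x * 2 ^ (i + 1)⌋).toNat % 2

/-- The e-property in `C_b(S)` of the circle operator at a point `z`. -/
def CircleEPropCbAt (z : UnitAddCircle) : Prop :=
  ∀ f : UnitAddCircle → ℝ, Continuous f → (∃ C : ℝ, ∀ x, |f x| ≤ C) →
    Tendsto (fun x => ⨆ n : ℕ, |circleU n f x - circleU n f z|) (𝓝 z) (𝓝 0)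

theorem circleRep_coe (r : ℝ) : circleRep (r : UnitAddCircle) = Int.fract r := by
  have h : ((Int.fract r : ℝ) : UnitAddCircle) = (r : UnitAddCircle) := by
    rw [Int.fract, AddCircle.coe_sub]
    have : ((⌊r⌋ : ℝ) : UnitAddCircle) = 0 := by
      rw [AddCircle.coe_eq_zero_iff]
      exact ⟨⌊r⌋, by simp⟩
    rw [this, sub_zero]
  rw [← h, circleRep]
  exact AddCircle.equivIco_coe_of_mem ⟨Int.fract_nonneg r, by simpa using Int.fract_lt_one r⟩

theorem coe_circleRep (x : UnitAddCircle) : ((circleRep x : ℝ) : UnitAddCircle) = x :=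
  AddCircle.coe_equivIco

theorem circleRep_nonneg (x : UnitAddCircle) : 0 ≤ circleRep x :=
  ((AddCircle.equivIco (1 : ℝ) 0) x).2.1

theorem circleRep_lt_one (x : UnitAddCircle) : circleRep x < 1 :=
  ((AddCircle.equivIco (1 : ℝ) 0) x).2.2.trans_eq (zero_add 1)

theorem circleRep_two_pow_nsmul (x : UnitAddCircle) (n : ℕ) :
    circleRep (2 ^ n • x) = Int.fract (circleRep x * 2 ^ n) := by
  conv_lhs => rw [← coe_circleRep x, ← AddCircle.coe_nsmul, circleRep_coe]
  simp [mul_comm]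

theorem binDigit_eq_ite {r : ℝ} (hr : 0 ≤ r) (n : ℕ) :
    binDigit r n = if Int.fract (r * 2 ^ n) < 1 / 2 then 0 else 1 := by
  have hs : 0 ≤ ⌊r * 2 ^ n⌋ := Int.floor_nonneg.2 (by positivity)
  have hfl := Int.floor_add_fract (r * 2 ^ n)
  have h0 := Int.fract_nonneg (r * 2 ^ n)
  have h1 := Int.fract_lt_one (r * 2 ^ n)
  have hpow : r * 2 ^ (n + 1) = 2 * (r * 2 ^ n) := by ring
  rw [binDigit, hpow]
  split_ifs with h
  · have : ⌊2 * (r * 2 ^ n)⌋ = 2 * ⌊r * 2 ^ n⌋ := by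
      rw [Int.floor_eq_iff]; push_cast; constructor <;> linarith
    rw [this]; omega
  · have : ⌊2 * (r * 2 ^ n)⌋ = 2 * ⌊r * 2 ^ n⌋ + 1 := by
      rw [Int.floor_eq_iff]; push_cast; constructor <;> linarith
    rw [this]; omega

theorem binDigit_circleRep (x : UnitAddCircle) (n : ℕ) :
    binDigit (circleRep x) n = if circleRep (2 ^ n • x) < 1 / 2 then 0 else 1 := by
  rw [binDigit_eq_ite (circleRep_nonneg x), circleRep_two_pow_nsmul]

theorem measurable_circleRep : Measurable circleRep :=
  measurable_subtype_coe.comp (AddCircle.measurableEquivIco 1 0).measurable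

theorem measurable_circleKer : Measurable circleKer := by
  have hd : Measurable fun y : UnitAddCircle => Measure.dirac (y + y) :=
    Measure.measurable_dirac.comp (measurable_id.add measurable_id)
  refine Measurable.ite (measurableSet_lt measurable_circleRep measurable_const) hd ?_
  refine Measure.measurable_of_measurable_coe _ fun s hs => ?_
  simp only [Measure.add_apply, Measure.smul_apply, smul_eq_mul]
  exact ((Measure.measurable_coe hs).comp hd).const_mul _ |>.const_add _

/-- The number of binary digits equal to `1` among the first `n` digits of `r`. -/
noncomputable def digitCount (r : ℝ) (n : ℕ) : ℕ :=
  ((Finset.range n).filter fun i => binDigit r i = 1).card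

theorem digitCount_succ (r : ℝ) (n : ℕ) :
    digitCount r (n + 1) = digitCount r n + if binDigit r n = 1 then 1 else 0 := by
  rw [digitCount, digitCount, Finset.range_add_one, Finset.filter_insert]
  split_ifs <;> simp

theorem circleP_dirac (x : UnitAddCircle) (n : ℕ) :
    ∃ b : ENNReal, b ≠ ⊤ ∧ circleP n (Measure.dirac x) =
      (1 / 2 : ENNReal) ^ digitCount (circleRep x) n • Measure.dirac (2 ^ n • x) +
        b • Measure.dirac (0 : UnitAddCircle) := by
  induction n with
  | zero => exact ⟨0, by simp, by simp [circleP, digitCount]⟩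
  | succ n ih =>
    obtain ⟨b, hb, h⟩ := ih
    have hker0 : circleKer 0 = Measure.dirac 0 := by
      have : circleRep 0 = 0 := by simpa using circleRep_coe 0
      simp [circleKer, this]
    have hstep : circleP (n + 1) (Measure.dirac x) =
        (1 / 2 : ENNReal) ^ digitCount (circleRep x) n • circleKer (2 ^ n • x) +
          b • Measure.dirac (0 : UnitAddCircle) := by
      rw [circleP, h]
      ext s hs
      rw [Measure.bind_apply hs measurable_circleKer.aemeasurable]
      have hm := (Measure.measurable_coe hs).comp measurable_circleKer
      simp only [Function.comp_def] at hm
      rw [lintegral_add_measure, lintegral_smul_measure, lintegral_smul_measure,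
        lintegral_dirac' _ hm, lintegral_dirac' _ hm, hker0]
      rfl
    have hadd : (2 ^ n • x + 2 ^ n • x : UnitAddCircle) = 2 ^ (n + 1) • x := by
      rw [pow_succ, mul_two, add_nsmul]
    rw [hstep, digitCount_succ, binDigit_circleRep, circleKer, hadd]
    split_ifs with h1
    · simp_all
    · exact ⟨b, hb, by simp⟩
    · refine ⟨(1 / 2 : ENNReal) ^ (digitCount (circleRep x) n + 1) + b, ?_, ?_⟩
      · exact ENNReal.add_ne_top.2 ⟨ENNReal.pow_ne_top (by simp), hb⟩
      · rw [smul_add, smul_smul, smul_smul, ← pow_succ, add_smul]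
        abel
    · simp_all

theorem circleU_eq {f : UnitAddCircle → ℝ} (hf : f 0 = 0) (n : ℕ) (x : UnitAddCircle) :
    circleU n f x = (1 / 2 : ℝ) ^ digitCount (circleRep x) n * f (2 ^ n • x) := by
  obtain ⟨b, hb, h⟩ := circleP_dirac x n
  have hi : ∀ a : UnitAddCircle, Integrable f (Measure.dirac a) := fun a =>
    integrable_dirac (by simp)
  rw [circleU, h, integral_add_measure ((hi _).smul_measure (ENNReal.pow_ne_top (by simp)))
    ((hi _).smul_measure hb), integral_smul_measure, integral_smul_measure, integral_dirac,
    integral_dirac, hf]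
  simp

theorem abs_circleU_le {f : UnitAddCircle → ℝ} (hf : f 0 = 0) {C : ℝ} (hC : ∀ x, |f x| ≤ C)
    (n : ℕ) (x : UnitAddCircle) : |circleU n f x| ≤ C := by
  rw [circleU_eq hf, abs_mul, abs_of_nonneg (by positivity)]
  calc _ ≤ 1 * |f (2 ^ n • x)| := by
        gcongr
        exact pow_le_one₀ (by norm_num) (by norm_num)
    _ ≤ C := by rw [one_mul]; exact hC _

/-- A point all of whose binary digits vanish from index `N` on is a multiple of `2⁻ᴺ`. -/
theorem two_pow_nsmul_eq_zero_of_binDigit {z : UnitAddCircle} {N : ℕ}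
    (hN : ∀ i, N ≤ i → binDigit (circleRep z) i ≠ 1) : 2 ^ N • z = 0 := by
  have hlt : ∀ i, N ≤ i → circleRep (2 ^ i • z) < 1 / 2 := fun i hi => by
    have := hN i hi
    rw [binDigit_circleRep] at this
    by_contra h
    exact this (if_neg h)
  have hdouble : ∀ j, circleRep (2 ^ (N + j) • z) = 2 ^ j * circleRep (2 ^ N • z) := by
    intro j
    induction j with
    | zero => simp
    | succ j ih =>
      have h1 := hlt (N + j) (by omega)
      have h0 := circleRep_nonneg (2 ^ (N + j) • z)
      have h2 : (2 ^ (N + (j + 1)) • z : UnitAddCircle) = 2 ^ 1 • (2 ^ (N + j) • z) := by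
        rw [← mul_nsmul, ← pow_add, add_assoc]
      rw [h2, circleRep_two_pow_nsmul, Int.fract_eq_self.2 ⟨by positivity, by linarith⟩, ih]
      ring
  have hzero : circleRep (2 ^ N • z) = 0 := by
    refine le_antisymm (not_lt.1 fun hpos => ?_) (circleRep_nonneg _)
    obtain ⟨j, hj⟩ := pow_unbounded_of_one_lt (1 / circleRep (2 ^ N • z)) (one_lt_two (α := ℝ))
    rw [div_lt_iff₀ hpos, ← hdouble] at hj
    exact absurd hj (circleRep_lt_one _).not_gt
  rw [← coe_circleRep (2 ^ N • z), hzero, AddCircle.coe_zero]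

theorem binDigit_div_two_pow (a : ℕ) {k i : ℕ} (hik : i < k) :
    binDigit ((a : ℝ) / 2 ^ k) i = a / 2 ^ (k - (i + 1)) % 2 := by
  have : (a : ℝ) / 2 ^ k * 2 ^ (i + 1) = (a : ℝ) / ((2 ^ (k - (i + 1)) : ℕ) : ℝ) := by
    have hk : (2 : ℝ) ^ k = 2 ^ (k - (i + 1)) * 2 ^ (i + 1) := by
      rw [← pow_add]; congr 1; omega
    rw [hk]; push_cast; field_simp
  rw [binDigit, this, Int.floor_toNat, Nat.floor_div_eq_div]

theorem exists_circleRep_eq_div {z : UnitAddCircle} {k : ℕ} (hz : 2 ^ k • z = 0) :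
    ∃ a : ℕ, a < 2 ^ k ∧ circleRep z = (a : ℝ) / 2 ^ k := by
  have h : Int.fract (circleRep z * 2 ^ k) = 0 := by
    rw [← circleRep_two_pow_nsmul, hz]
    simpa using circleRep_coe 0
  have hfl := Int.floor_add_fract (circleRep z * 2 ^ k)
  have hnn : 0 ≤ ⌊circleRep z * 2 ^ k⌋ :=
    Int.floor_nonneg.2 (mul_nonneg (circleRep_nonneg z) (by positivity))
  obtain ⟨a, ha⟩ := Int.eq_ofNat_of_zero_le hnn
  rw [h, ha, add_zero, Int.cast_natCast] at hfl
  have heq : circleRep z = (a : ℝ) / 2 ^ k := by rw [hfl]; field_simp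
  refine ⟨a, ?_, heq⟩
  have h1 := circleRep_lt_one z
  rw [heq, div_lt_one (by positivity)] at h1
  exact_mod_cast h1

/-- Adding `2⁻⁽ᵏ⁺¹⁾` to a multiple of `2⁻ᵏ` does not alter its first `k` binary digits. -/
theorem digitCount_add_inv_two_pow {z : UnitAddCircle} {k : ℕ} (hz : 2 ^ k • z = 0) :
    digitCount (circleRep (z + ((1 / 2 ^ (k + 1) : ℝ) : UnitAddCircle))) k =
      digitCount (circleRep z) k := by
  obtain ⟨a, ha, heq⟩ := exists_circleRep_eq_div hz
  have hrep : circleRep (z + ((1 / 2 ^ (k + 1) : ℝ) : UnitAddCircle)) =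
      ((2 * a + 1 : ℕ) : ℝ) / 2 ^ (k + 1) := by
    have hlt : ((2 * a + 1 : ℕ) : ℝ) < 2 ^ (k + 1) := by
      have : 2 * a + 1 < 2 ^ (k + 1) := by rw [pow_succ]; omega
      exact_mod_cast this
    have hsum : (a : ℝ) / 2 ^ k + 1 / 2 ^ (k + 1) = ((2 * a + 1 : ℕ) : ℝ) / 2 ^ (k + 1) := by
      push_cast; field_simp; ring
    rw [← coe_circleRep z, heq, ← AddCircle.coe_add, circleRep_coe, hsum, Int.fract_eq_self]
    exact ⟨by positivity, (div_lt_one (by positivity)).2 hlt⟩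
  rw [digitCount, digitCount, hrep, heq]
  congr 1
  refine Finset.filter_congr fun i hi => ?_
  have hik := Finset.mem_range.1 hi
  rw [binDigit_div_two_pow _ (by omega : i < k + 1), binDigit_div_two_pow _ hik]
  have hk : k + 1 - (i + 1) = (k - (i + 1)) + 1 := by omega
  rw [hk, pow_succ', ← Nat.div_div_eq_div_mul]
  have : (2 * a + 1) / 2 = a := by omega
  rw [this]

theorem digitCount_eq_ncard {r : ℝ} {k : ℕ} (hk : ∀ i, k ≤ i → binDigit r i ≠ 1) :
    digitCount r k = {i : ℕ | binDigit r i = 1}.ncard := by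
  rw [digitCount, ← Set.ncard_coe_finset]
  congr 1
  ext i
  simp only [Finset.coe_filter, Finset.mem_range, Set.mem_ofPred_eq, and_iff_right_iff_imp]
  exact fun h => not_le.1 fun hki => hk i hki h

theorem le_limsup_iSup_abs_circleU_sub {z : UnitAddCircle}
    (hz : {i : ℕ | binDigit (circleRep z) i = 1}.Finite) {f : UnitAddCircle → ℝ} {C : ℝ}
    (hC : ∀ x, |f x| ≤ C) (hf0 : f 0 = 0) (hf : f (((1 : ℝ) / 2 : ℝ) : UnitAddCircle) = 1) :
    (2 : ℝ) ^ (-({i : ℕ | binDigit (circleRep z) i = 1}.ncard : ℤ)) ≤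
      limsup (fun x => ⨆ n : ℕ, |circleU n f x - circleU n f z|) (𝓝 z) := by
  have hbound : ∀ (x : UnitAddCircle) (n : ℕ), |circleU n f x - circleU n f z| ≤ C + C :=
    fun x n => (abs_sub _ _).trans
      (add_le_add (abs_circleU_le hf0 hC n x) (abs_circleU_le hf0 hC n z))
  obtain ⟨N, hN⟩ := hz.bddAbove
  have hdig : ∀ i, N + 1 ≤ i → binDigit (circleRep z) i ≠ 1 := fun i hi h => by
    have := hN h
    omega
  have hlim : Tendsto (fun k : ℕ => z + ((1 / 2 ^ (k + 1) : ℝ) : UnitAddCircle)) atTop (𝓝 z) := by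
    have h1 : Tendsto (fun k : ℕ => (1 / 2 ^ (k + 1) : ℝ)) atTop (𝓝 0) := by
      simpa [Function.comp_def] using (tendsto_pow_atTop_nhds_zero_of_lt_one (r := (1 / 2 : ℝ))
        (by norm_num) (by norm_num)).comp (tendsto_add_atTop_nat 1)
    have h2 := ((AddCircle.continuous_mk' (1 : ℝ)).tendsto 0).comp h1
    simpa [Function.comp_def] using h2.const_add z
  refine le_limsup_of_frequently_le (hlim.frequently (Eventually.frequently ?_)) ?_
  · filter_upwards [eventually_ge_atTop (N + 1)] with k hk
    have hdk : ∀ i, k ≤ i → binDigit (circleRep z) i ≠ 1 := fun i hi => hdig i (hk.trans hi)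
    have hzk := two_pow_nsmul_eq_zero_of_binDigit hdk
    refine le_trans ?_ (le_ciSup ⟨C + C, by rintro _ ⟨n, rfl⟩; exact hbound _ n⟩ k)
    have hhalf : 2 ^ k • (z + ((1 / 2 ^ (k + 1) : ℝ) : UnitAddCircle)) =
        (((1 : ℝ) / 2 : ℝ) : UnitAddCircle) := by
      rw [nsmul_add, hzk, zero_add, ← AddCircle.coe_nsmul]
      congr 1
      simp only [nsmul_eq_mul, Nat.cast_pow, Nat.cast_ofNat]
      field_simp
      ring
    rw [circleU_eq hf0, circleU_eq hf0, hhalf, hzk, hf, hf0, digitCount_add_inv_two_pow hzk,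
      digitCount_eq_ncard hdk, mul_zero, sub_zero, mul_one, abs_of_nonneg (by positivity)]
    simp
  · exact isBoundedUnder_of ⟨C + C, fun x => ciSup_le (hbound x)⟩

theorem not_circleEPropCbAt {z : UnitAddCircle}
    (hz : {i : ℕ | binDigit (circleRep z) i = 1}.Finite) {f : UnitAddCircle → ℝ}
    (hcont : Continuous f) {C : ℝ} (hC : ∀ x, |f x| ≤ C) (hf0 : f 0 = 0)
    (hf : f (((1 : ℝ) / 2 : ℝ) : UnitAddCircle) = 1) : ¬ CircleEPropCbAt z := by
  intro h
  have hle := le_limsup_iSup_abs_circleU_sub hz hC hf0 hf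
  rw [(h f hcont ⟨C, hC⟩).limsup_eq] at hle
  exact absurd hle (not_le.2 (by positivity))

theorem finite_binDigit_of_two_pow_nsmul_eq_zero {z : UnitAddCircle} {k : ℕ}
    (hz : 2 ^ k • z = 0) : {i : ℕ | binDigit (circleRep z) i = 1}.Finite := by
  refine (Set.finite_lt_nat k).subset fun i hi => ?_
  refine Set.mem_ofPred_eq ▸ not_le.1 fun hki => ?_
  have h0 : (2 ^ i • z : UnitAddCircle) = 0 := by
    rw [← Nat.sub_add_cancel hki, pow_add, mul_nsmul', hz, nsmul_zero]
  have hrep : circleRep 0 = 0 := by simpa using circleRep_coe 0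
  rw [Set.mem_ofPred_eq, binDigit_circleRep, h0, hrep] at hi
  norm_num at hi

theorem dense_two_pow_torsion : Dense {z : UnitAddCircle | ∃ k : ℕ, 2 ^ k • z = 0} := by
  intro x
  have hlim : Tendsto (fun k : ℕ => (⌊circleRep x * 2 ^ k⌋₊ : ℝ) / 2 ^ k) atTop
      (𝓝 (circleRep x)) :=
    (tendsto_nat_floor_mul_div_atTop (circleRep_nonneg x)).comp
      (tendsto_pow_atTop_atTop_of_one_lt (one_lt_two (α := ℝ)))
  have h := ((AddCircle.continuous_mk' (1 : ℝ)).tendsto (circleRep x)).comp hlim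
  rw [show QuotientAddGroup.mk' (AddSubgroup.zmultiples (1 : ℝ)) (circleRep x) = x from
    coe_circleRep x] at h
  refine mem_closure_of_tendsto (f := fun k : ℕ =>
    (((⌊circleRep x * 2 ^ k⌋₊ : ℝ) / 2 ^ k : ℝ) : UnitAddCircle)) (b := atTop) ?_ ?_
  · exact h
  · refine Eventually.of_forall fun k => ⟨k, ?_⟩
    rw [← AddCircle.coe_nsmul, AddCircle.coe_eq_zero_iff]
    refine ⟨⌊circleRep x * 2 ^ k⌋₊, ?_⟩
    simp only [zsmul_eq_mul, mul_one, Int.cast_natCast, nsmul_eq_mul, Nat.cast_pow, Nat.cast_ofNat]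
    field_simp

/-- The Markov operator on the circle generated by `π(y,·) = δ_{2y}` for `y ∈ [0,1/2)`,
`π(y,·) = (1/2)δ₀ + (1/2)δ_{2y−1}` for `y ∈ [1/2,1)`, fails the e-property in `C_b(S)` at
every dyadic rational `z` (i.e. at every `z` with only finitely many binary digits equal
to `1`): there is a bounded Lipschitz `f` with `f(0) = 0`, `f(1/2) = 1` and
`limsup_{x→z} sup_n |Uⁿf(x) − Uⁿf(z)| ≥ 2^{−m}`, `m` being the number of digits of `z`
equal to `1`. Consequently, the set of points at which the e-property in `C_b(S)` fails is
dense. -/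
theorem circle_not_eProp_at_dyadic :
    (∀ z : UnitAddCircle, {i : ℕ | binDigit (circleRep z) i = 1}.Finite →
      ∃ f : UnitAddCircle → ℝ, (∃ c : NNReal, LipschitzWith c f) ∧
        (∃ C : ℝ, ∀ x, |f x| ≤ C) ∧
        f 0 = 0 ∧ f (((1 : ℝ) / 2 : ℝ) : UnitAddCircle) = 1 ∧
        (2 : ℝ) ^ (-({i : ℕ | binDigit (circleRep z) i = 1}.ncard : ℤ)) ≤
          Filter.limsup (fun x => ⨆ n : ℕ, |circleU n f x - circleU n f z|) (𝓝 z) ∧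
        ¬ CircleEPropCbAt z) ∧
    Dense {z : UnitAddCircle | ¬ CircleEPropCbAt z} := by
  let f : UnitAddCircle → ℝ := fun x => 2 * ‖x‖
  have hlip : LipschitzWith 2 f := LipschitzWith.of_dist_le_mul fun x y => by
    have := abs_norm_sub_norm_le x y
    rw [Real.dist_eq, dist_eq_norm, ← mul_sub, abs_mul, abs_two]
    exact mul_le_mul_of_nonneg_left this zero_le_two
  have hC : ∀ x, |f x| ≤ 1 := fun x => by
    have := AddCircle.norm_le_half_period (1 : ℝ) (x := x) one_ne_zero
    rw [abs_one] at this
    rw [abs_of_nonneg (by positivity)]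
    change 2 * ‖x‖ ≤ 1
    linarith
  have hf0 : f 0 = 0 := by simp [f]
  have hf : f (((1 : ℝ) / 2 : ℝ) : UnitAddCircle) = 1 := by
    simp only [f, AddCircle.norm_half_period_eq, abs_one]
    norm_num
  refine ⟨fun z hz => ⟨f, ⟨2, hlip⟩, ⟨1, hC⟩, hf0, hf,
    le_limsup_iSup_abs_circleU_sub hz hC hf0 hf,
    not_circleEPropCbAt hz hlip.continuous hC hf0 hf⟩, ?_⟩
  refine dense_two_pow_torsion.mono ?_
  rintro z ⟨k, hk⟩
  exact not_circleEPropCbAt (finite_binDigit_of_two_pow_nsmul_eq_zero hk) hlip.continuous hC hf0 hf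
end

section
/- Let S = [−2,−1] ∪ [0,1] ⊆ ℝ with the Euclidean metric. There exists a Markov-Feller operator P on S which is asymptotically stable (with invariant measure δ_0) and such that the set of points of S at which P does not have the e-property in C_b(S) has Lebesgue measure at least 1/2; in particular, this set is uncountable. -/
open MeasureTheory ProbabilityTheory Filter Topology

/-- The e-property in `C_b(S)` at a point `z`: for every bounded continuous `f`,
`sup_{n} |Uⁿf(x) − Uⁿf(z)| → 0` as `x → z`. -/
def EPropCbAt {S : Type*} [MeasurableSpace S] [TopologicalSpace S]
    (κ : ProbabilityTheory.Kernel S S) (z : S) : Prop :=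
  ∀ f : S → ℝ, Continuous f → IsBddFun f →
    Tendsto (fun x => ⨆ n : ℕ, |kDual κ n f x - kDual κ n f z|) (𝓝 z) (𝓝 0)


/-- The state space `S = [−2,−1] ∪ [0,1]`, as a metric subspace of `ℝ`. -/
def SVCSpace : Set ℝ := Set.Icc (-2) (-1) ∪ Set.Icc 0 1

lemma isProbabilityMeasure_kIter_s16 {S : Type*} [MeasurableSpace S] (κ : Kernel S S) [IsMarkovKernel κ]
    (μ : Measure S) [IsProbabilityMeasure μ] (n : ℕ) : IsProbabilityMeasure (kIter κ n μ) := by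
  induction n with
  | zero => assumption
  | succ n ih => exact inferInstanceAs (IsProbabilityMeasure ((kIter κ n μ).bind κ))

/-- The transition kernel which, from a state `x`, jumps to `o` with probability `p x` and
moves to `T x` otherwise. -/
noncomputable def jumpKernel {S : Type*} [TopologicalSpace S] [MeasurableSpace S] [BorelSpace S]
    (p : C(S, unitInterval)) (T : C(S, S)) (o : S) : Kernel S S where
  toFun x := ENNReal.ofReal (1 - p x) • Measure.dirac (T x) +
    ENNReal.ofReal (p x) • Measure.dirac o
  measurable' := by
    have hp : Measurable fun x => (p x : ℝ) :=
      Continuous.measurable (by fun_prop)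
    refine Measure.measurable_of_measurable_coe _ fun s hs => ?_
    have hT : Measurable fun x => Measure.dirac (T x) s :=
      (Measure.measurable_coe hs).comp (Measure.measurable_dirac.comp T.continuous.measurable)
    simp only [Measure.add_apply, Measure.smul_apply, smul_eq_mul]
    fun_prop

/-- The dual operator of `jumpKernel p T o`. -/
def jumpDual {S : Type*} [TopologicalSpace S]
    (p : C(S, unitInterval)) (T : C(S, S)) (o : S) (f : S → ℝ) (x : S) : ℝ :=
  (1 - p x) * f (T x) + p x * f o

section JumpKernel

variable {S : Type*} [TopologicalSpace S] {p : C(S, unitInterval)} {T : C(S, S)} {o : S}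
  {f : S → ℝ}

lemma continuous_jumpDual (hf : Continuous f) : Continuous (jumpDual p T o f) := by
  unfold jumpDual
  fun_prop

lemma continuous_iterate_jumpDual (hf : Continuous f) (n : ℕ) :
    Continuous ((jumpDual p T o)^[n] f) := by
  induction n with
  | zero => exact hf
  | succ n ih => rw [Function.iterate_succ_apply']; exact continuous_jumpDual ih

lemma abs_jumpDual_le {C : ℝ} (hf : ∀ x, |f x| ≤ C) (x : S) : |jumpDual p T o f x| ≤ C := by
  have h0 := (p x).2.1
  have h1 := (p x).2.2
  have hT := abs_le.1 (hf (T x))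
  have ho := abs_le.1 (hf o)
  unfold jumpDual
  rw [abs_le]
  constructor <;> nlinarith

lemma abs_iterate_jumpDual_le {C : ℝ} (hf : ∀ x, |f x| ≤ C) (n : ℕ) (x : S) :
    |(jumpDual p T o)^[n] f x| ≤ C := by
  induction n generalizing x with
  | zero => exact hf x
  | succ n ih => rw [Function.iterate_succ_apply']; exact abs_jumpDual_le ih x

lemma iterate_jumpDual_base (hp : p o = 0) (hT : T o = o) (n : ℕ) :
    (jumpDual p T o)^[n] f o = f o := by
  induction n with
  | zero => rfl
  | succ n ih => simp [Function.iterate_succ_apply', jumpDual, hp, hT, ih]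

variable [MeasurableSpace S] [BorelSpace S]

instance : IsMarkovKernel (jumpKernel p T o) where
  isProbabilityMeasure x := by
    have h0 := (p x).2.1
    have h1 := (p x).2.2
    constructor
    simp only [jumpKernel, Kernel.coe_mk, Measure.add_apply, Measure.smul_apply, measure_univ,
      smul_eq_mul, mul_one]
    rw [← ENNReal.ofReal_add (by linarith) h0]
    simp

lemma integral_jumpKernel (hf : Continuous f) (x : S) :
    ∫ y, f y ∂(jumpKernel p T o x) = jumpDual p T o f x := by
  have h0 := (p x).2.1
  have h1 := (p x).2.2
  have hi (y : S) : Integrable f (Measure.dirac y) :=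
    integrable_dirac' hf.measurable.stronglyMeasurable (by simp)
  simp only [jumpKernel, Kernel.coe_mk]
  rw [integral_add_measure ((hi _).smul_measure ENNReal.ofReal_ne_top)
    ((hi _).smul_measure ENNReal.ofReal_ne_top), integral_smul_measure, integral_smul_measure,
    integral_dirac' _ _ hf.measurable.stronglyMeasurable,
    integral_dirac' _ _ hf.measurable.stronglyMeasurable,
    ENNReal.toReal_ofReal (by linarith), ENNReal.toReal_ofReal h0]
  rfl

lemma isFeller_jumpKernel : IsFeller (jumpKernel p T o) := fun f hf _ => by
  simp only [integral_jumpKernel hf]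
  exact continuous_jumpDual hf

lemma integral_kIter_jumpKernel (μ : Measure S) [IsProbabilityMeasure μ] (n : ℕ)
    (hf : Continuous f) (hb : IsBddFun f) :
    ∫ x, f x ∂(kIter (jumpKernel p T o) n μ) = ∫ x, (jumpDual p T o)^[n] f x ∂μ := by
  induction n generalizing f with
  | zero => rfl
  | succ n ih =>
    obtain ⟨C, hC⟩ := hb
    have := isProbabilityMeasure_kIter_s16 (jumpKernel p T o) μ n
    have := isProbabilityMeasure_kIter_s16 (jumpKernel p T o) μ (n + 1)
    have hi : Integrable f (kIter (jumpKernel p T o) (n + 1) μ) :=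
      .of_bound hf.measurable.aestronglyMeasurable C (.of_forall hC)
    rw [Function.iterate_succ_apply, ← ih (continuous_jumpDual hf) ⟨C, abs_jumpDual_le hC⟩]
    calc ∫ x, f x ∂(kIter (jumpKernel p T o) (n + 1) μ)
      _ = ∫ x, ∫ y, f y ∂(jumpKernel p T o x) ∂(kIter (jumpKernel p T o) n μ) :=
        Kernel.integral_comp (κ := .const Unit (kIter (jumpKernel p T o) n μ)) (a := ()) hi
      _ = _ := by simp only [integral_jumpKernel hf]

lemma kDual_jumpKernel (n : ℕ) (hf : Continuous f) (hb : IsBddFun f) (x : S) :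
    kDual (jumpKernel p T o) n f x = (jumpDual p T o)^[n] f x := by
  rw [kDual, integral_kIter_jumpKernel _ n hf hb, integral_dirac' _ _
    (continuous_iterate_jumpDual hf n).measurable.stronglyMeasurable]

/-- If the dual iterates of every function converge pointwise to its value at
an absorbing state, then the Dirac measure there is asymptotically stable. -/
lemma isAsympStable_jumpKernel (hp : p o = 0) (hT : T o = o)
    (h : ∀ (f : S → ℝ) (x : S), Tendsto (fun n => (jumpDual p T o)^[n] f x) atTop (𝓝 (f o))) :
    IsAsympStable (jumpKernel p T o) (Measure.dirac o) := by
  refine ⟨inferInstance, ?_, fun μ hμ f hf hb => ?_⟩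
  · change (Measure.dirac o).bind (jumpKernel p T o) = _
    rw [Measure.dirac_bind (jumpKernel p T o).measurable]
    simp [jumpKernel, hp, hT]
  · simp only [integral_kIter_jumpKernel _ _ hf hb]
    rw [integral_dirac' _ _ hf.measurable.stronglyMeasurable]
    obtain ⟨C, hC⟩ := hb
    have := tendsto_integral_of_dominated_convergence (μ := μ)
      (F := fun n => (jumpDual p T o)^[n] f) (f := fun _ => f o) (fun _ => C)
      (fun n => (continuous_iterate_jumpDual hf n).measurable.aestronglyMeasurable)
      (integrable_const _) (fun n => .of_forall (abs_iterate_jumpDual_le hC n))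
      (.of_forall (h f))
    simpa using this

end JumpKernel

lemma zero_mem_SVCSpace : (0 : ℝ) ∈ SVCSpace := Or.inr (by norm_num)

lemma le_one_of_mem_SVCSpace (x : SVCSpace) : (x : ℝ) ≤ 1 := by
  rcases x.2 with h | h
  · linarith [h.2]
  · exact h.2

/-- The motion on `SVCSpace`: doubling, stopped at `1`, on `[0, 1]`, and the distance to `K` on
`[-2, -1]`. -/
noncomputable def svcMap (K : Set ℝ) : C(SVCSpace, SVCSpace) where
  toFun x := ⟨min 1 (max (2 * x) (Metric.infDist (x : ℝ) K)), Or.inr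
    ⟨le_min zero_le_one (le_max_of_le_right Metric.infDist_nonneg), min_le_left _ _⟩⟩
  continuous_toFun := by
    have := Metric.continuous_infDist_pt K
    fun_prop

/-- The probability of jumping to `0` from a point of `SVCSpace`: the positive part. -/
noncomputable def svcProb : C(SVCSpace, unitInterval) where
  toFun x := ⟨max x 0, le_max_right _ _, max_le (le_one_of_mem_SVCSpace x) zero_le_one⟩
  continuous_toFun := by fun_prop

/-- The dual operator of the chain on `SVCSpace` determined by `K`. -/
noncomputable abbrev svcDual (K : Set ℝ) : (SVCSpace → ℝ) → SVCSpace → ℝ :=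
  jumpDual svcProb (svcMap K) ⟨0, zero_mem_SVCSpace⟩

section SVC

variable {K : Set ℝ} {f : SVCSpace → ℝ}

lemma svcProb_zero : svcProb ⟨0, zero_mem_SVCSpace⟩ = 0 := by
  ext
  simp [svcProb]

lemma svcMap_of_nonneg (hK : Set.Ici 0 ⊆ K) {x : SVCSpace} (hx : 0 ≤ (x : ℝ)) :
    (svcMap K x : ℝ) = min 1 (2 * (x : ℝ)) := by
  simp [svcMap, Metric.infDist_zero_of_mem (hK hx), hx]

lemma svcMap_of_neg {x : SVCSpace} (hx : (x : ℝ) < 0) :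
    (svcMap K x : ℝ) = min 1 (Metric.infDist (x : ℝ) K) := by
  have : 2 * (x : ℝ) ≤ Metric.infDist (x : ℝ) K := by
    linarith [Metric.infDist_nonneg (x := (x : ℝ)) (s := K)]
  simp [svcMap, this]

lemma svcMap_zero (hK : Set.Ici 0 ⊆ K) :
    svcMap K ⟨0, zero_mem_SVCSpace⟩ = ⟨0, zero_mem_SVCSpace⟩ := by
  ext
  rw [svcMap_of_nonneg hK le_rfl]
  simp

lemma svcDual_of_nonneg {x : SVCSpace} (hx : 0 ≤ (x : ℝ)) :
    svcDual K f x = (1 - x) * f (svcMap K x) + x * f ⟨0, zero_mem_SVCSpace⟩ := by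
  simp [jumpDual, svcProb, hx]

lemma svcDual_of_neg {x : SVCSpace} (hx : (x : ℝ) < 0) : svcDual K f x = f (svcMap K x) := by
  simp [jumpDual, svcProb, hx.le]

lemma iterate_svcDual_zero (hK : Set.Ici 0 ⊆ K) (n : ℕ) :
    (svcDual K)^[n] f ⟨0, zero_mem_SVCSpace⟩ = f ⟨0, zero_mem_SVCSpace⟩ :=
  iterate_jumpDual_base svcProb_zero (svcMap_zero hK) n

lemma svcMap_nonneg (x : SVCSpace) : 0 ≤ (svcMap K x : ℝ) :=
  le_min zero_le_one (le_max_of_le_right Metric.infDist_nonneg)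

lemma iterate_svcDual_eq_of_one_le (hK : Set.Ici 0 ⊆ K) {m n : ℕ} (hmn : m < n) {x : SVCSpace}
    (hx : 0 ≤ (x : ℝ)) (hm : 1 ≤ 2 ^ m * (x : ℝ)) :
    (svcDual K)^[n] f x = f ⟨0, zero_mem_SVCSpace⟩ := by
  induction m generalizing n x with
  | zero =>
    obtain ⟨n, rfl⟩ := Nat.exists_eq_succ_of_ne_zero hmn.ne'
    have h1 : (x : ℝ) = 1 := le_antisymm (le_one_of_mem_SVCSpace x) (by simpa using hm)
    rw [Function.iterate_succ_apply', svcDual_of_nonneg hx, h1, iterate_svcDual_zero hK]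
    ring
  | succ m ih =>
    obtain ⟨n, rfl⟩ := Nat.exists_eq_succ_of_ne_zero (Nat.ne_zero_of_lt hmn)
    rw [Function.iterate_succ_apply', svcDual_of_nonneg hx, iterate_svcDual_zero hK,
      ih (by omega) (svcMap_nonneg x)]
    · ring
    · rw [svcMap_of_nonneg hK hx]
      rcases min_choice 1 (2 * (x : ℝ)) with h | h <;> rw [h]
      · simpa using one_le_pow₀ (one_le_two : (1 : ℝ) ≤ 2)
      · rw [pow_succ] at hm
        linarith

lemma eventually_iterate_svcDual_eq_of_nonneg (hK : Set.Ici 0 ⊆ K) (f : SVCSpace → ℝ)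
    {x : SVCSpace} (hx : 0 ≤ (x : ℝ)) :
    ∀ᶠ n in atTop, (svcDual K)^[n] f x = f ⟨0, zero_mem_SVCSpace⟩ := by
  rcases hx.eq_or_lt with h | h
  · obtain rfl : x = ⟨0, zero_mem_SVCSpace⟩ := Subtype.ext h.symm
    exact .of_forall (iterate_svcDual_zero hK)
  · obtain ⟨m, hm⟩ := pow_unbounded_of_one_lt (1 / (x : ℝ)) one_lt_two
    filter_upwards [eventually_gt_atTop m] with n hn
    exact iterate_svcDual_eq_of_one_le hK hn hx ((div_lt_iff₀ h).1 hm).le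

lemma tendsto_iterate_svcDual (hK : Set.Ici 0 ⊆ K) (f : SVCSpace → ℝ) (x : SVCSpace) :
    Tendsto (fun n => (svcDual K)^[n] f x) atTop (𝓝 (f ⟨0, zero_mem_SVCSpace⟩)) := by
  rcases le_or_gt 0 (x : ℝ) with hx | hx
  · exact tendsto_nhds_of_eventually_eq (eventually_iterate_svcDual_eq_of_nonneg hK f hx)
  · rw [← tendsto_add_atTop_iff_nat 1]
    simp only [Function.iterate_succ_apply', svcDual_of_neg hx]
    exact tendsto_nhds_of_eventually_eq
      (eventually_iterate_svcDual_eq_of_nonneg hK f (svcMap_nonneg x))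

/-- Starting from `2⁻ⁿ`, the chain reaches `1` in `n` steps with probability at least `1 / 4`. -/
lemma one_fourth_le_iterate_svcDual (hK : Set.Ici 0 ⊆ K) (n : ℕ) {x : SVCSpace}
    (hx : (x : ℝ) = (1 / 2) ^ (n + 1)) :
    1 / 4 + (x : ℝ) / 2 ≤ (svcDual K)^[n + 1] (fun y => max (y : ℝ) 0) x := by
  have hx0 : 0 ≤ (x : ℝ) := by rw [hx]; positivity
  have hT := svcMap_of_nonneg hK hx0
  rw [Function.iterate_succ_apply', svcDual_of_nonneg hx0, iterate_svcDual_zero hK]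
  induction n generalizing x with
  | zero =>
    have h2 : (x : ℝ) = 1 / 2 := by simpa using hx
    rw [h2] at hT
    norm_num [hT, h2]
  | succ n ih =>
    have h2 : (2 * x : ℝ) = (1 / 2) ^ (n + 1) := by rw [hx, pow_succ _ (n + 1)]; ring
    have h1 : (1 / 2 : ℝ) ^ (n + 1) ≤ 1 / 2 :=
      pow_le_of_le_one (by norm_num) (by norm_num) (by simp)
    have hT' : (svcMap K x : ℝ) = 2 * x := by
      rw [hT, min_eq_right]
      linarith
    have h := ih (x := svcMap K x) (by rw [hT', h2]) (svcMap_nonneg x)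
      (svcMap_of_nonneg hK (svcMap_nonneg x))
    rw [Function.iterate_succ_apply', svcDual_of_nonneg (svcMap_nonneg x), iterate_svcDual_zero hK]
    simp only [max_self, mul_zero, add_zero] at h ⊢
    rw [hT'] at h ⊢
    nlinarith

/-- If `K` is closed and contains no negative rational, then arbitrarily close to a point of
`K ∩ [-2, -1]` there are points which are mapped to a power of `1 / 2`. -/
lemma exists_svcMap_eq_pow (hK : IsClosed K) (hq : ∀ q : ℚ, (q : ℝ) < 0 → (q : ℝ) ∉ K)
    {z : ℝ} (hz : z ∈ Set.Icc (-2) (-1)) (hzK : z ∈ K) {ε : ℝ} (hε : 0 < ε) :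
    ∃ x : SVCSpace, |(x : ℝ) - z| < ε ∧ (x : ℝ) < 0 ∧
      ∃ n : ℕ, (svcMap K x : ℝ) = (1 / 2) ^ (n + 1) := by
  obtain ⟨w, hw1, hw2⟩ : ∃ w : ℚ, max (-2) (z - ε) < w ∧ (w : ℝ) < min (-1) (z + ε) :=
    exists_rat_btwn (by
      obtain ⟨h1, h2⟩ := hz
      rw [max_lt_iff, lt_min_iff, lt_min_iff]
      refine ⟨⟨?_, ?_⟩, ?_, ?_⟩ <;> linarith)
  rw [max_lt_iff] at hw1
  rw [lt_min_iff] at hw2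
  have hpos : 0 < Metric.infDist (w : ℝ) K :=
    (hK.notMem_iff_infDist_pos ⟨z, hzK⟩).1 (hq w (by linarith))
  obtain ⟨n, hn⟩ := exists_pow_lt_of_lt_one hpos (one_half_lt_one (α := ℝ))
  have hpow : (1 / 2 : ℝ) ^ (n + 1) ≤ (1 / 2) ^ n :=
    pow_le_pow_of_le_one (by norm_num) (by norm_num) n.le_succ
  obtain ⟨x, hx, hxn : Metric.infDist x K = _⟩ := intermediate_value_uIcc (a := z) (b := w)
    (Metric.continuous_infDist_pt K).continuousOn (show (1 / 2 : ℝ) ^ (n + 1) ∈ _ by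
      rw [Metric.infDist_zero_of_mem hzK, Set.uIcc_of_le hpos.le]
      exact ⟨by positivity, by linarith⟩)
  have hxI : x ∈ Set.Icc (-2 : ℝ) (-1) :=
    Set.uIcc_subset_Icc hz ⟨hw1.1.le, hw2.1.le⟩ hx
  have hx0 : x < 0 := by linarith [hxI.2]
  refine ⟨⟨x, Or.inl hxI⟩, ?_, hx0, n, ?_⟩
  · refine (Set.abs_sub_left_of_mem_uIcc hx).trans_lt ?_
    rw [abs_lt]
    constructor <;> linarith
  · refine (svcMap_of_neg hx0).trans ?_
    rw [hxn, min_eq_right]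
    exact pow_le_one₀ (by norm_num) (by norm_num)

lemma not_ePropCbAt_svc (hK : IsClosed K) (hK0 : Set.Ici 0 ⊆ K)
    (hq : ∀ q : ℚ, (q : ℝ) < 0 → (q : ℝ) ∉ K) {z : SVCSpace}
    (hz : (z : ℝ) ∈ Set.Icc (-2) (-1)) (hzK : (z : ℝ) ∈ K) :
    ¬ EPropCbAt (jumpKernel svcProb (svcMap K) ⟨0, zero_mem_SVCSpace⟩) z := by
  intro h
  have hf : Continuous fun y : SVCSpace => max (y : ℝ) 0 := by fun_prop
  have hC : ∀ y : SVCSpace, |max (y : ℝ) 0| ≤ 1 := fun y => by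
    rw [abs_of_nonneg (le_max_right _ _)]
    exact max_le (le_one_of_mem_SVCSpace y) zero_le_one
  have hlim := h _ hf ⟨1, hC⟩
  simp only [kDual_jumpKernel _ hf ⟨1, hC⟩] at hlim
  obtain ⟨ε, hε, hball⟩ := Metric.eventually_nhds_iff.1
    (hlim.eventually (gt_mem_nhds (by norm_num : (0 : ℝ) < 1 / 4)))
  obtain ⟨x, hxz, hx0, n, hxn⟩ := exists_svcMap_eq_pow hK hq hz hzK hε
  have hlt := hball (y := x) hxz
  refine hlt.not_ge (le_trans ?_ (le_ciSup ⟨1 + 1, ?_⟩ (n + 2)))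
  · have hz0 : (z : ℝ) < 0 := by linarith [hz.2]
    have hTz : svcMap K z = ⟨0, zero_mem_SVCSpace⟩ := by
      ext
      simp [svcMap_of_neg hz0, Metric.infDist_zero_of_mem hzK]
    have hUz : (svcDual K)^[n + 2] (fun y => max (y : ℝ) 0) z = 0 := by
      rw [Function.iterate_succ_apply', svcDual_of_neg hz0, hTz, iterate_svcDual_zero hK0, max_self]
    have hUx : (svcDual K)^[n + 2] (fun y => max (y : ℝ) 0) x =
        (svcDual K)^[n + 1] (fun y => max (y : ℝ) 0) (svcMap K x) := by
      rw [Function.iterate_succ_apply', svcDual_of_neg hx0]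
    rw [hUz, hUx, sub_zero]
    have := one_fourth_le_iterate_svcDual hK0 n hxn
    have := svcMap_nonneg (K := K) x
    exact le_trans (by linarith) (le_abs_self _)
  · rintro _ ⟨m, rfl⟩
    exact (abs_sub _ _).trans
      (add_le_add (abs_iterate_jumpDual_le hC m x) (abs_iterate_jumpDual_le hC m z))

end SVC

/-- There is a closed set of reals without rational points filling at least half of `[-2, -1]`. -/
lemma exists_isClosed_irrational_half_le_volume :
    ∃ F : Set ℝ, IsClosed F ∧ (∀ q : ℚ, (q : ℝ) ∉ F) ∧
      (1 / 2 : ENNReal) ≤ volume (Set.Icc (-2) (-1) ∩ F) := by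
  obtain ⟨U, hqU, hU, hvol⟩ := (Set.range ((↑) : ℚ → ℝ)).exists_isOpen_lt_of_lt
    (μ := volume) (1 / 2) (by simp [(Set.countable_range _).measure_zero])
  refine ⟨Uᶜ, hU.isClosed_compl, fun q hq => hq (hqU ⟨q, rfl⟩), ?_⟩
  rw [← Set.sdiff_eq]
  refine le_trans ?_ le_measure_sdiff
  rw [Real.volume_Icc]
  norm_num
  refine ENNReal.le_sub_of_add_le_right (hvol.trans_le (by simp)).ne ?_
  calc (2⁻¹ : ENNReal) + volume U ≤ 2⁻¹ + 2⁻¹ := by gcongr; simpa using hvol.le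
    _ = 1 := ENNReal.inv_two_add_inv_two

/-- On `S = [−2,−1] ∪ [0,1]` there exists an asymptotically stable Markov–Feller operator,
with invariant measure `δ₀`, such that the set of points at which the e-property in `C_b(S)`
fails has Lebesgue measure at least `1/2`; in particular this set is uncountable. -/
theorem exists_asympStable_feller_not_eProp_on_set_of_positive_measure :
    ∃ κ : ProbabilityTheory.Kernel SVCSpace SVCSpace, IsMarkovKernel κ ∧ IsFeller κ ∧
      (∃ h0 : (0 : ℝ) ∈ SVCSpace,
        IsAsympStable κ (Measure.dirac (⟨0, h0⟩ : SVCSpace))) ∧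
      (1 / 2 : ENNReal) ≤ volume (Subtype.val '' {z : SVCSpace | ¬ EPropCbAt κ z}) ∧
      ¬ ({z : SVCSpace | ¬ EPropCbAt κ z}).Countable := by
  obtain ⟨F, hF, hFq, hvol⟩ := exists_isClosed_irrational_half_le_volume
  have hK : IsClosed (F ∪ Set.Ici 0) := hF.union isClosed_Ici
  have hK0 : Set.Ici 0 ⊆ F ∪ Set.Ici 0 := Set.subset_union_right
  have hq (q : ℚ) (hq0 : (q : ℝ) < 0) : (q : ℝ) ∉ F ∪ Set.Ici 0 := by
    rintro (h | h)
    · exact hFq q h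
    · exact hq0.not_ge h
  have hsub : Set.Icc (-2) (-1) ∩ F ⊆ Subtype.val '' {z : SVCSpace | ¬ EPropCbAt
      (jumpKernel svcProb (svcMap (F ∪ Set.Ici 0)) ⟨0, zero_mem_SVCSpace⟩) z} := fun z hz =>
    ⟨⟨z, Or.inl hz.1⟩, not_ePropCbAt_svc hK hK0 hq hz.1 (Or.inl hz.2), rfl⟩
  have hhalf := hvol.trans (measure_mono hsub)
  refine ⟨_, inferInstance, isFeller_jumpKernel, ⟨zero_mem_SVCSpace,
    isAsympStable_jumpKernel svcProb_zero (svcMap_zero hK0) (tendsto_iterate_svcDual hK0)⟩,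
    hhalf, fun hc => ?_⟩
  rw [(hc.image _).measure_zero] at hhalf
  simp at hhalf
end
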